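/- arXiv:1506.03628 — 2 statements merged into one kernel-verified Lean document; each statement's English description precedes it below -/
import Mathlib

section
/- Let N ≥ 2 be an integer, ω > 0, and 1 < p < p_max, and let u be a ground-state profile of (QLS). Suppose v : ℝ^N → ℝ is smooth, radially symmetric, not identically zero, satisfies ∫_{ℝ^N}(v² + |∇v|²) dx < ∞, and solves L₊v = 0 pointwise on ℝ^N. Then v changes sign: there exist points x, y ∈ ℝ^N with v(x) > 0 and v(y) < 0. -/
open MeasureTheory Real Filter Topology

noncomputable section

/-- Partial derivative along the `i`-th coordinate direction. -/
def pd {N : ℕ} {F : Type*} [NormedAddCommGroup F] [NormedSpace ℝ F]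
    (i : Fin N) (f : EuclideanSpace ℝ (Fin N) → F) (x : EuclideanSpace ℝ (Fin N)) : F :=
  fderiv ℝ f x (EuclideanSpace.single i 1)

/-- Euclidean Laplacian. -/
def lap {N : ℕ} {F : Type*} [NormedAddCommGroup F] [NormedSpace ℝ F]
    (f : EuclideanSpace ℝ (Fin N) → F) (x : EuclideanSpace ℝ (Fin N)) : F :=
  ∑ i : Fin N, pd i (pd i f) x

/-- Squared norm of the gradient of a real-valued function: `|∇f|²`. -/
def gradsq {N : ℕ} (f : EuclideanSpace ℝ (Fin N) → ℝ) (x : EuclideanSpace ℝ (Fin N)) : ℝ :=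
  ∑ i : Fin N, (pd i f x) ^ 2

/-- A ground-state profile of the quasilinear Schrödinger equation (QLS)
`-Δu - uΔ(u²) + ωu - u^p = 0` on `ℝ^N`: smooth, positive, radially symmetric with a
strictly decreasing positive profile, solves (QLS) pointwise, and decays
exponentially together with all its derivatives. -/
structure IsGroundState (N : ℕ) (ω p : ℝ) (u : EuclideanSpace ℝ (Fin N) → ℝ) : Prop where
  smooth : ContDiff ℝ (⊤ : ℕ∞) u
  pos : ∀ x, 0 < u x
  radial : ∃ U : ℝ → ℝ, StrictAntiOn U (Set.Ici 0) ∧ (∀ r, 0 ≤ r → 0 < U r) ∧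
      ∀ x, u x = U ‖x‖
  solves : ∀ x, -lap u x - u x * lap (fun y => (u y) ^ 2) x + ω * u x - (u x) ^ p = 0
  decay : ∀ k : ℕ, ∃ C > 0, ∃ δ > 0, ∀ x,
      ‖iteratedFDeriv ℝ k u x‖ ≤ C * Real.exp (-δ * ‖x‖)

/-- The linearized operator `L₊` around `u` (real-valued functions). -/
def Lplus {N : ℕ} (ω p : ℝ) (u η : EuclideanSpace ℝ (Fin N) → ℝ)
    (x : EuclideanSpace ℝ (Fin N)) : ℝ :=
  -lap η x - 2 * u x * lap (fun y => u y * η y) x + ω * η x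
    - (lap (fun y => (u y) ^ 2) x + p * u x ^ (p - 1)) * η x

/-- The linearized operator `L₋` around `u`. -/
def Lminus {N : ℕ} (ω p : ℝ) (u ζ : EuclideanSpace ℝ (Fin N) → ℝ)
    (x : EuclideanSpace ℝ (Fin N)) : ℝ :=
  -lap ζ x + ω * ζ x - (lap (fun y => (u y) ^ 2) x + u x ^ (p - 1)) * ζ x

lemma core_ode (m : ℕ) (ω p : ℝ) (U U1 U2 U3 V V1 V2 : ℝ → ℝ)
    (hU : ∀ r, HasDerivAt U (U1 r) r) (hU1 : ∀ r, HasDerivAt U1 (U2 r) r)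
    (hU2 : ∀ r, HasDerivAt U2 (U3 r) r)
    (hV : ∀ r, HasDerivAt V (V1 r) r) (hV1 : ∀ r, HasDerivAt V1 (V2 r) r)
    (hpos : ∀ r, 0 < U r) (hanti : StrictAntiOn U (Set.Ici 0))
    (hUo : ∀ r, 0 < r → -(1 + 2 * U r ^ 2) * (U2 r + (m + 1) / r * U1 r)
      - 2 * U r * U1 r ^ 2 + ω * U r - U r ^ p = 0)
    (hVo : ∀ r, 0 < r → -(1 + 2 * U r ^ 2) * (V2 r + (m + 1) / r * V1 r)
      - 4 * U r * U1 r * V1 r + (ω - 4 * U r * (U2 r + (m + 1) / r * U1 r)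
        - 2 * U1 r ^ 2 - p * U r ^ (p - 1)) * V r = 0)
    (C δ : ℝ) (hC : 0 < C) (hδ : 0 < δ)
    (hU0b : ∀ r, 0 ≤ r → |U r| ≤ C)
    (hU1b : ∀ r, 0 ≤ r → |U1 r| ≤ C * exp (-δ * r))
    (hU2b : ∀ r, 0 ≤ r → |U2 r| ≤ C * exp (-δ * r))
    (hVnn : ∀ r, 0 ≤ r → 0 ≤ V r) (hVne : ∃ r, 0 ≤ r ∧ V r ≠ 0)
    (hE : ¬ ∃ R, 0 < R ∧ ∀ r, R ≤ r → 1 ≤ V r ^ 2 + V1 r ^ 2) : False := by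
  -- third-order equation
  have hW : ∀ r, 0 < r → -(4 * U r * U1 r) * (U2 r + (m + 1) / r * U1 r)
      -(1 + 2 * U r ^ 2) * (U3 r + (-(m + 1) / r ^ 2 * U1 r + (m + 1) / r * U2 r))
      - (2 * U1 r * U1 r ^ 2 + 2 * U r * (2 * U1 r * U2 r)) + ω * U1 r
        - U1 r * p * U r ^ (p - 1) = 0 := by
    intro r hr
    have h1 : HasDerivAt (fun r => -(1 + 2 * U r ^ 2) * (U2 r + (m + 1) / r * U1 r)
      - 2 * U r * U1 r ^ 2 + ω * U r - U r ^ p) (-(4 * U r * U1 r) * (U2 r + (m + 1) / r * U1 r)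
      -(1 + 2 * U r ^ 2) * (U3 r + (-(m + 1) / r ^ 2 * U1 r + (m + 1) / r * U2 r))
      - (2 * U1 r * U1 r ^ 2 + 2 * U r * (2 * U1 r * U2 r)) + ω * U1 r
        - U1 r * p * U r ^ (p - 1)) r := by
      have hd : HasDerivAt (fun r : ℝ => ((m:ℝ) + 1) / r) (-(m + 1) / r ^ 2) r := by
        have := (hasDerivAt_inv hr.ne').const_mul ((m:ℝ) + 1)
        refine this.congr_deriv ?_
        field_simp
      have ha : HasDerivAt (fun r => -(1 + 2 * U r ^ 2)) (-(4 * U r * U1 r)) r := by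
        have := ((((hU r).pow 2).const_mul 2).const_add 1).neg
        refine this.congr_deriv ?_
        simp; ring
      have hb : HasDerivAt (fun r => 2 * U r * U1 r ^ 2)
          (2 * U1 r * U1 r ^ 2 + 2 * U r * (2 * U1 r * U2 r)) r := by
        have := ((hU r).const_mul 2).mul ((hU1 r).pow 2)
        refine this.congr_deriv ?_
        simp
      have hc := (hU r).rpow_const (p := p) (Or.inl (hpos r).ne')
      have := (((ha.mul ((hU2 r).add (hd.mul (hU1 r)))).sub hb).add ((hU r).const_mul ω)).sub hc
      refine this.congr_deriv ?_
      simp; ring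
    have h2 : (fun r => -(1 + 2 * U r ^ 2) * (U2 r + (m + 1) / r * U1 r)
      - 2 * U r * U1 r ^ 2 + ω * U r - U r ^ p) =ᶠ[𝓝 r] fun _ => 0 := by
      filter_upwards [lt_mem_nhds hr] with s hs
      exact hUo s hs
    exact h1.unique ((hasDerivAt_const r (0:ℝ)).congr_of_eventuallyEq h2)
  set G : ℝ → ℝ := fun r => r ^ (m + 1) * (1 + 2 * U r ^ 2) * (U2 r * V r - U1 r * V1 r) with hG
  have hGd : ∀ r, 0 < r → HasDerivAt G ((m + 1) * (r ^ (m + 1) / r ^ 2) * (1 + 2 * U r ^ 2) * (U1 r * V r)) r := by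
    intro r hr
    have h1 : HasDerivAt (fun r : ℝ => r ^ (m + 1)) ((m + 1) * r ^ m) r := by
      have := hasDerivAt_pow (m + 1) r
      simpa using this
    have h2 : HasDerivAt (fun r => (1 + 2 * U r ^ 2)) (4 * U r * U1 r) r := by
      have := ((((hU r).pow 2).const_mul 2).const_add 1)
      refine this.congr_deriv ?_
      simp; ring
    have h3 := (h1.mul h2).mul (((hU2 r).mul (hV r)).sub ((hU1 r).mul (hV1 r)))
    refine h3.congr_deriv (Eq.symm ?_)
    have e1 := hW r hr
    have e2 := hVo r hr
    have hr0 := hr.ne'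
    have e3 : ((m:ℝ) + 1) * r ^ m = r ^ (m + 1) * ((m + 1) / r) := by
      field_simp; ring
    simp only [Pi.mul_apply, Pi.sub_apply]
    rw [e3]
    linear_combination (r ^ (m+1) * V r) * e1 - (r ^ (m+1) * U1 r) * e2
  have hU1np : ∀ r, 0 < r → U1 r ≤ 0 := by
    intro r hr
    have h := hanti.antitoneOn.derivWithin_nonpos (x := r)
    rw [derivWithin_of_mem_nhds (Ici_mem_nhds hr), (hU r).deriv] at h
    exact h
  have hGcont : Continuous G := by
    have c0 : Continuous U := continuous_iff_continuousAt.2 fun r => (hU r).continuousAt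
    have c1 : Continuous U1 := continuous_iff_continuousAt.2 fun r => (hU1 r).continuousAt
    have c2 : Continuous U2 := continuous_iff_continuousAt.2 fun r => (hU2 r).continuousAt
    have c3 : Continuous V := continuous_iff_continuousAt.2 fun r => (hV r).continuousAt
    have c4 : Continuous V1 := continuous_iff_continuousAt.2 fun r => (hV1 r).continuousAt
    fun_prop
  have hGanti : AntitoneOn G (Set.Ici 0) := by
    apply antitoneOn_of_deriv_nonpos (convex_Ici 0) hGcont.continuousOn
    · intro r hr
      rw [interior_Ici] at hr
      exact (hGd r hr).differentiableAt.differentiableWithinAt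
    · intro r hr
      rw [interior_Ici] at hr
      rw [(hGd r hr).deriv]
      have hr' : 0 < r := hr
      have : U1 r * V r ≤ 0 := mul_nonpos_of_nonpos_of_nonneg (hU1np r hr) (hVnn r hr'.le)
      apply mul_nonpos_of_nonneg_of_nonpos _ this
      positivity
  have hG0 : G 0 = 0 := by simp [hG]
  have hGz : ∀ r, 0 < r → G r = 0 := by
    intro r0 hr0
    by_contra hne
    have hle : G r0 ≤ G 0 := hGanti (by simp) hr0.le hr0.le
    have hlt : G r0 < 0 := lt_of_le_of_ne (by rw [hG0] at hle; exact hle) hne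
    apply hE
    have ht : Tendsto (fun r : ℝ => r ^ (m + 1) * exp (-δ * r)) atTop (𝓝 0) := by
      have := tendsto_rpow_mul_exp_neg_mul_atTop_nhds_zero ((m + 1 : ℕ) : ℝ) δ hδ
      simpa only [Real.rpow_natCast] using this
    set K := (1 + 2 * C ^ 2) * C with hK
    have hKp : 0 < K := by positivity
    have hev : ∀ᶠ r in atTop, r ^ (m + 1) * exp (-δ * r) < -G r0 / (2 * K) :=
      ht.eventually_lt_const (by apply div_pos <;> linarith)
    obtain ⟨R, hR⟩ := eventually_atTop.1 hev
    refine ⟨max R r0, lt_max_of_lt_right hr0, fun r hr => ?_⟩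
    have hrR : R ≤ r := le_trans (le_max_left _ _) hr
    have hrr : r0 ≤ r := le_trans (le_max_right _ _) hr
    have hrp : 0 < r := lt_of_lt_of_le hr0 hrr
    have h1 := hR r hrR
    rw [lt_div_iff₀ (by positivity)] at h1
    have h2 : G r ≤ G r0 := hGanti hr0.le hrp.le hrr
    have h3 : |G r| ≤ r ^ (m + 1) * (1 + 2 * C ^ 2) * (C * exp (-δ * r) * (|V r| + |V1 r|)) := by
      simp only [hG]
      rw [abs_mul, abs_mul, abs_of_pos (pow_pos hrp _), abs_of_pos (by positivity : 0 < 1 + 2 * U r ^ 2)]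
      have : U r ^ 2 ≤ C ^ 2 := sq_le_sq' (by linarith [hpos r]) (le_trans (le_abs_self _) (hU0b r hrp.le))
      have h4 : |U2 r * V r - U1 r * V1 r| ≤ C * exp (-δ * r) * (|V r| + |V1 r|) := by
        calc _ ≤ |U2 r * V r| + |U1 r * V1 r| := abs_sub _ _
          _ = |U2 r| * |V r| + |U1 r| * |V1 r| := by rw [abs_mul, abs_mul]
          _ ≤ C * exp (-δ * r) * |V r| + C * exp (-δ * r) * |V1 r| := by
            gcongr
            · exact hU2b r hrp.le
            · exact hU1b r hrp.le
          _ = _ := by ring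
      gcongr
    have h5 : -G r0 ≤ |G r| := le_trans (by linarith) (neg_le_abs (G r))
    set q := r ^ (m + 1) * exp (-δ * r) with hq
    have hqp : 0 < q := by positivity
    have h6 : -G r0 ≤ q * K * (|V r| + |V1 r|) := by
      refine le_trans (le_trans h5 h3) (le_of_eq ?_)
      rw [hq, hK]; ring
    have h7 : 2 ≤ |V r| + |V1 r| := by
      by_contra hc
      push Not at hc
      have : q * K * (|V r| + |V1 r|) < q * K * 2 := by gcongr
      linarith
    rw [← sq_abs (V r), ← sq_abs (V1 r)]
    nlinarith [sq_nonneg (|V r| - |V1 r|), abs_nonneg (V r), abs_nonneg (V1 r)]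
  have hWV : ∀ r, 0 < r → U1 r * V r = 0 := by
    intro r hr
    have h1 := hGd r hr
    have h2 : G =ᶠ[𝓝 r] fun _ => 0 := by
      filter_upwards [lt_mem_nhds hr] with s hs
      exact hGz s hs
    have h3 := h1.unique ((hasDerivAt_const r (0:ℝ)).congr_of_eventuallyEq h2)
    have h4 : ((m:ℝ) + 1) * (r ^ (m + 1) / r ^ 2) * (1 + 2 * U r ^ 2) ≠ 0 := by positivity
    exact (mul_eq_zero.1 h3).resolve_left h4
  obtain ⟨r0, hr0, hv0⟩ := hVne
  obtain ⟨ε, hε, hball⟩ := Metric.eventually_nhds_iff.1 ((hV r0).continuousAt.eventually_ne hv0)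
  have hU1z : ∀ s ∈ Set.Ioo r0 (r0 + ε), U1 s = 0 := by
    intro s hs
    refine (mul_eq_zero.1 (hWV s (lt_of_le_of_lt hr0 hs.1))).resolve_right (hball ?_)
    rw [Real.dist_eq, abs_lt]; constructor <;> linarith [hs.1, hs.2]
  have hlt : r0 + ε / 3 < r0 + ε / 2 := by linarith
  obtain ⟨c, hc, hc'⟩ := exists_hasDerivAt_eq_slope U U1 hlt
    (fun r _ => (hU r).continuousAt.continuousWithinAt) (fun r _ => hU r)
  rw [hU1z c ⟨by linarith [hc.1], by linarith [hc.2]⟩] at hc'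
  have h8 := hanti (a := r0 + ε / 3) (b := r0 + ε / 2) (by simp; positivity) (by simp; positivity) hlt
  have : (U (r0 + ε / 2) - U (r0 + ε / 3)) / (r0 + ε / 2 - (r0 + ε / 3)) < 0 :=
    div_neg_of_neg_of_pos (by linarith) (by linarith)
  linarith

lemma pd_pd {N : ℕ} (i : Fin N) (f : EuclideanSpace ℝ (Fin N) → ℝ)
    (hf : ContDiff ℝ (⊤ : ℕ∞) f) (x : EuclideanSpace ℝ (Fin N)) :
    pd i (pd i f) x = deriv (deriv (fun t : ℝ => f (x + t • EuclideanSpace.single i (1:ℝ)))) 0 := by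
  have key : ∀ g : EuclideanSpace ℝ (Fin N) → ℝ, Differentiable ℝ g → ∀ t : ℝ,
      HasDerivAt (fun t : ℝ => g (x + t • EuclideanSpace.single i (1:ℝ)))
        (pd i g (x + t • EuclideanSpace.single i (1:ℝ))) t := by
    intro g hg t
    have h1 : HasDerivAt (fun t : ℝ => x + t • EuclideanSpace.single i (1:ℝ))
        (EuclideanSpace.single i (1:ℝ)) t := by
      simpa using ((hasDerivAt_id t).smul_const (EuclideanSpace.single i (1:ℝ))).const_add x
    exact (hg _).hasFDerivAt.comp_hasDerivAt t h1
  have hpd : Differentiable ℝ (pd i f) := by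
    have : ContDiff ℝ 1 (fderiv ℝ f) := hf.fderiv_right (by norm_cast)
    exact (this.differentiable (by norm_num)).clm_apply (differentiable_const _)
  have h1 : deriv (fun t : ℝ => f (x + t • EuclideanSpace.single i (1:ℝ))) =
      fun t => pd i f (x + t • EuclideanSpace.single i (1:ℝ)) :=
    funext fun t => (key f (hf.differentiable (by simp)) t).deriv
  rw [h1, (key _ hpd 0).deriv]
  simp

lemma lap_radial {N : ℕ} (i0 : Fin N) (f : EuclideanSpace ℝ (Fin N) → ℝ)
    (hf : ContDiff ℝ (⊤ : ℕ∞) f) (hrad : ∀ x y, ‖x‖ = ‖y‖ → f x = f y) 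
    (F F1 F2 : ℝ → ℝ) (hF : ∀ r, F r = f (r • EuclideanSpace.single i0 (1:ℝ)))
    (hF1 : ∀ r, HasDerivAt F (F1 r) r) (hF2 : ∀ r, HasDerivAt F1 (F2 r) r)
    (r : ℝ) (hr : 0 < r) :
    lap f (r • EuclideanSpace.single i0 (1:ℝ)) = F2 r + ((N:ℝ) - 1) / r * F1 r := by
  unfold lap
  rw [← Finset.add_sum_erase _ _ (Finset.mem_univ i0)]
  have h0 : pd i0 (pd i0 f) (r • EuclideanSpace.single i0 (1:ℝ)) = F2 r := by
    rw [pd_pd i0 f hf]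
    have e : (fun t : ℝ => f (r • EuclideanSpace.single i0 (1:ℝ) + t • EuclideanSpace.single i0 (1:ℝ)))
        = fun t => F (r + t) := by
      funext t
      rw [hF, add_smul]
    rw [e]
    have e1 : deriv (fun t => F (r + t)) = fun t => F1 (r + t) := by
      funext t
      exact ((hF1 (r + t)).comp_const_add r t).deriv
    rw [e1, ((hF2 (r + 0)).comp_const_add r 0).deriv, add_zero]
  have h1 : ∀ i ∈ Finset.univ.erase i0, pd i (pd i f) (r • EuclideanSpace.single i0 (1:ℝ)) = F1 r / r := by
    intro i hi
    have hi : i ≠ i0 := Finset.ne_of_mem_erase hi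
    rw [pd_pd i f hf]
    have e : (fun t : ℝ => f (r • EuclideanSpace.single i0 (1:ℝ) + t • EuclideanSpace.single i (1:ℝ)))
        = fun t => F (√(r ^ 2 + t ^ 2)) := by
      funext t
      rw [hF]
      apply hrad
      rw [← sq_eq_sq₀ (norm_nonneg _) (norm_nonneg _), norm_add_sq_real]
      have hin : inner ℝ (EuclideanSpace.single i0 (1:ℝ)) (EuclideanSpace.single i (1:ℝ)) = 0 := by
        rw [EuclideanSpace.inner_single_left]
        simp [hi.symm]
      simp [norm_smul, inner_smul_left, inner_smul_right, hin]
      rw [Real.sq_sqrt (by positivity)]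
    rw [e]
    have hs : ∀ t : ℝ, 0 < r ^ 2 + t ^ 2 := fun t => by positivity
    have e1 : deriv (fun t => F (√(r ^ 2 + t ^ 2))) = fun t => t * (F1 (√(r ^ 2 + t ^ 2)) / √(r ^ 2 + t ^ 2)) := by
      funext t
      have d1 : HasDerivAt (fun t : ℝ => r ^ 2 + t ^ 2) (2 * t) t := by
        simpa using (hasDerivAt_pow 2 t).const_add (r ^ 2)
      have d2 := (hF1 (√(r ^ 2 + t ^ 2))).comp t (d1.sqrt (hs t).ne')
      refine d2.deriv.trans ?_
      have := (Real.sqrt_pos.2 (hs t)).ne'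
      field_simp
    rw [e1]
    have hc : ContinuousAt (fun t => (F1 (√(r ^ 2 + t ^ 2)) / √(r ^ 2 + t ^ 2))) 0 := by
      have c1 : Continuous F1 := continuous_iff_continuousAt.2 fun r => (hF2 r).continuousAt
      apply ContinuousAt.div
      · fun_prop
      · fun_prop
      · exact (Real.sqrt_pos.2 (hs 0)).ne'
    have : HasDerivAt (fun t => t * (F1 (√(r ^ 2 + t ^ 2)) / √(r ^ 2 + t ^ 2))) (F1 r / r) 0 := by
      rw [hasDerivAt_iff_tendsto_slope_zero]
      have h := hc.tendsto
      simp only [ne_eq, OfNat.ofNat_ne_zero, not_false_eq_true, zero_pow, add_zero, Real.sqrt_sq hr.le] at h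
      refine (h.mono_left nhdsWithin_le_nhds).congr' ?_
      filter_upwards [self_mem_nhdsWithin] with t ht
      have ht : t ≠ 0 := ht
      simp [ht]
    exact this.deriv
  rw [h0, Finset.sum_congr rfl h1]
  rw [Finset.sum_const, Finset.card_erase_of_mem (Finset.mem_univ _), Finset.card_univ, Fintype.card_fin,
    nsmul_eq_mul, Nat.cast_sub (Nat.one_le_of_lt i0.2)]
  push_cast; ring

lemma ray_bound {N : ℕ} (e : EuclideanSpace ℝ (Fin N)) (he : ‖e‖ = 1)
    (u : EuclideanSpace ℝ (Fin N) → ℝ) (hu : ContDiff ℝ (⊤ : ℕ∞) u) (k : ℕ) (C δ : ℝ)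
    (hb : ∀ x, ‖iteratedFDeriv ℝ k u x‖ ≤ C * Real.exp (-δ * ‖x‖)) (r : ℝ) (hr : 0 ≤ r) :
    |iteratedDeriv k (fun r : ℝ => u (r • e)) r| ≤ C * Real.exp (-δ * r) := by
  rw [← Real.norm_eq_abs, ← norm_iteratedFDeriv_eq_norm_iteratedDeriv]
  have h1 := ContinuousLinearMap.iteratedFDeriv_comp_right (ContinuousLinearMap.toSpanSingleton ℝ e)
    hu r (i := k) (by exact_mod_cast le_top)
  have h2 : (fun r : ℝ => u (r • e)) = u ∘ (ContinuousLinearMap.toSpanSingleton ℝ e) := by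
    funext r; simp
  rw [h2, h1]
  refine le_trans (ContinuousMultilinearMap.norm_compContinuousLinearMap_le _ _) ?_
  simp only [ContinuousLinearMap.norm_toSpanSingleton, he, Finset.prod_const_one, mul_one]
  refine le_trans (hb _) (le_of_eq ?_)
  simp [norm_smul, he, abs_of_nonneg hr]

lemma not_large {N : ℕ} (hN : 2 ≤ N) (i0 : Fin N)
    (v : EuclideanSpace ℝ (Fin N) → ℝ) (hv : ContDiff ℝ (⊤ : ℕ∞) v)
    (hrad : ∀ x y, ‖x‖ = ‖y‖ → v x = v y)
    (hint : Integrable (fun x => (v x) ^ 2 + gradsq v x)) (V1 : ℝ → ℝ)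
    (hV : ∀ r, HasDerivAt (fun r : ℝ => v (r • EuclideanSpace.single i0 (1:ℝ))) (V1 r) r) :
    ¬ ∃ R, 0 < R ∧ ∀ r, R ≤ r → 1 ≤ (v (r • EuclideanSpace.single i0 (1:ℝ))) ^ 2 + V1 r ^ 2 := by
  rintro ⟨R, hR, h⟩
  have key : ∀ x : EuclideanSpace ℝ (Fin N), R ≤ ‖x‖ → 1 ≤ v x ^ 2 + gradsq v x := by
    intro x hx
    have hxp : 0 < ‖x‖ := lt_of_lt_of_le hR hx
    refine le_trans (h ‖x‖ hx) ?_
    have e1 : v (‖x‖ • EuclideanSpace.single i0 (1:ℝ)) = v x := hrad _ _ (by simp [norm_smul])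
    rw [e1]
    gcongr
    set θ := ‖x‖⁻¹ • x with hθ
    have hθn : ‖θ‖ = 1 := by rw [hθ, norm_smul]; simp [hxp.ne']
    have hxθ : ‖x‖ • θ = x := by rw [hθ, smul_smul, mul_inv_cancel₀ hxp.ne', one_smul]
    have d1 : HasDerivAt (fun r : ℝ => v (r • θ)) (fderiv ℝ v x θ) ‖x‖ := by
      have a : HasDerivAt (fun r : ℝ => r • θ) θ ‖x‖ := by
        simpa using (hasDerivAt_id ‖x‖).smul_const θ
      have b := ((hv.differentiable (by simp)) (‖x‖ • θ)).hasFDerivAt.comp_hasDerivAt _ a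
      rw [hxθ] at b
      exact b
    have d2 : HasDerivAt (fun r : ℝ => v (r • θ)) (V1 ‖x‖) ‖x‖ := by
      refine (hV ‖x‖).congr_of_eventuallyEq (Eventually.of_forall fun r => ?_)
      exact hrad _ _ (by simp [norm_smul, hθn])
    rw [d2.unique d1]
    have hsum : θ = ∑ i, θ i • EuclideanSpace.single i (1:ℝ) := by
      ext j
      simp [Finset.sum_apply, Pi.single_apply]
    have hfd : fderiv ℝ v x θ = ∑ i, θ i * pd i v x := by
      conv_lhs => rw [hsum]
      simp [pd]
    rw [hfd]
    refine le_trans (Finset.sum_mul_sq_le_sq_mul_sq _ _ _) ?_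
    have : ∑ i, θ i ^ 2 = 1 := by
      have := EuclideanSpace.real_norm_sq_eq θ
      rw [hθn] at this; simpa using this.symm
    rw [this, one_mul]
    rfl
  have hfin := hint.measure_ge_lt_top (ε := 1) one_pos
  have : Nonempty (Fin N) := ⟨i0⟩
  have hsub : (Set.univ : Set (EuclideanSpace ℝ (Fin N))) ⊆
      Metric.ball 0 R ∪ {a | 1 ≤ v a ^ 2 + gradsq v a} := by
    intro x _
    by_cases hx : R ≤ ‖x‖
    · exact Or.inr (key x hx)
    · left; simpa using hx
  have h1 : volume (Set.univ : Set (EuclideanSpace ℝ (Fin N))) < ⊤ := by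
    refine lt_of_le_of_lt (measure_mono hsub) (lt_of_le_of_lt (measure_union_le _ _) ?_)
    exact ENNReal.add_lt_top.2 ⟨measure_ball_lt_top, hfin⟩
  have h2 : volume (Set.univ : Set (EuclideanSpace ℝ (Fin N))) = ⊤ :=
    measure_univ_of_isAddLeftInvariant _
  rw [h2] at h1
  exact lt_irrefl _ h1

lemma hasDeriv_chain (F : ℝ → ℝ) (hF : ContDiff ℝ (⊤ : ℕ∞) F) (k : ℕ) (r : ℝ) :
    HasDerivAt (iteratedDeriv k F) (iteratedDeriv (k + 1) F r) r := by
  rw [iteratedDeriv_succ]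
  exact ((hF.differentiable_iteratedDeriv k (by exact_mod_cast ENat.natCast_lt_top k)) r).hasDerivAt

/-- A nontrivial radial finite-energy solution of `L₊ v = 0` changes sign. -/
theorem stmt3 (N : ℕ) (hN : 2 ≤ N) (ω p : ℝ) (hω : 0 < ω) (hp : 1 < p)
    (hpmax : 3 ≤ N → p < (3 * (N : ℝ) + 2) / ((N : ℝ) - 2))
    (u : EuclideanSpace ℝ (Fin N) → ℝ) (hu : IsGroundState N ω p u)
    (v : EuclideanSpace ℝ (Fin N) → ℝ) (hv : ContDiff ℝ (⊤ : ℕ∞) v)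
    (hrad : ∀ x y, ‖x‖ = ‖y‖ → v x = v y)
    (hne : ∃ x, v x ≠ 0)
    (hint : Integrable (fun x => (v x) ^ 2 + gradsq v x))
    (heq : ∀ x, Lplus ω p u v x = 0) :
    (∃ x, 0 < v x) ∧ (∃ y, v y < 0) := by
  have hN0 : 0 < N := by omega
  obtain ⟨m, rfl⟩ : ∃ m, N = m + 2 := ⟨N - 2, by omega⟩
  set i0 : Fin (m + 2) := 0 with hi0
  set e : EuclideanSpace ℝ (Fin (m + 2)) := EuclideanSpace.single i0 (1:ℝ) with he
  have hen : ‖e‖ = 1 := by simp [he]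
  obtain ⟨U₀, hanti0, hU0pos, hU0⟩ := hu.radial
  have hurad : ∀ x y, ‖x‖ = ‖y‖ → u x = u y := fun x y h => by rw [hU0, hU0, h]
  have hlin : ContDiff ℝ (⊤ : ℕ∞) (fun r : ℝ => r • e) := contDiff_id.smul contDiff_const
  set U : ℝ → ℝ := fun r => u (r • e) with hUdef
  set V : ℝ → ℝ := fun r => v (r • e) with hVdef
  have hUs : ContDiff ℝ (⊤ : ℕ∞) U := hu.smooth.comp hlin
  have hVs : ContDiff ℝ (⊤ : ℕ∞) V := hv.comp hlin
  set U1 := iteratedDeriv 1 U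
  set U2 := iteratedDeriv 2 U
  set U3 := iteratedDeriv 3 U
  set V1 := iteratedDeriv 1 V
  set V2 := iteratedDeriv 2 V
  have dU : ∀ r, HasDerivAt U (U1 r) r := fun r => by
    have h := hasDeriv_chain U hUs 0 r
    rw [iteratedDeriv_zero] at h
    exact h
  have dU1 : ∀ r, HasDerivAt U1 (U2 r) r := hasDeriv_chain U hUs 1
  have dU2 : ∀ r, HasDerivAt U2 (U3 r) r := hasDeriv_chain U hUs 2
  have dV : ∀ r, HasDerivAt V (V1 r) r := fun r => by
    have h := hasDeriv_chain V hVs 0 r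
    rw [iteratedDeriv_zero] at h
    exact h
  have dV1 : ∀ r, HasDerivAt V1 (V2 r) r := hasDeriv_chain V hVs 1
  have hpos : ∀ r, 0 < U r := fun r => hu.pos _
  have hanti : StrictAntiOn U (Set.Ici 0) := by
    intro a ha b hb hab
    have ha' : 0 ≤ a := ha
    have hb' : 0 ≤ b := hb
    simp only [hUdef, hU0, norm_smul, hen, mul_one, Real.norm_eq_abs, abs_of_nonneg ha', abs_of_nonneg hb']
    exact hanti0 ha hb hab
  have lu : ∀ r, 0 < r → lap u (r • e) = U2 r + (m + 1) / r * U1 r := by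
    intro r hr
    rw [lap_radial i0 u hu.smooth hurad U U1 U2 (fun _ => rfl) dU dU1 r hr]
    push_cast; ring
  have lv : ∀ r, 0 < r → lap v (r • e) = V2 r + (m + 1) / r * V1 r := by
    intro r hr
    rw [lap_radial i0 v hv hrad V V1 V2 (fun _ => rfl) dV dV1 r hr]
    push_cast; ring
  have luv : ∀ r, 0 < r → lap (fun y => u y * v y) (r • e) =
      (U2 r * V r + 2 * U1 r * V1 r + U r * V2 r) + (m + 1) / r * (U1 r * V r + U r * V1 r) := by
    intro r hr
    rw [lap_radial i0 (fun y => u y * v y) (hu.smooth.mul hv)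
      (fun x y h => by rw [hurad x y h, hrad x y h]) (fun r => U r * V r)
      (fun r => U1 r * V r + U r * V1 r)
      (fun r => (U2 r * V r + U1 r * V1 r) + (U1 r * V1 r + U r * V2 r)) (fun _ => rfl)
      (fun r => (dU r).mul (dV r))
      (fun r => ((dU1 r).mul (dV r)).add ((dU r).mul (dV1 r))) r hr]
    push_cast; ring
  have luu : ∀ r, 0 < r → lap (fun y => u y ^ 2) (r • e) =
      (2 * U2 r * U r + 2 * U1 r ^ 2) + (m + 1) / r * (2 * U1 r * U r) := by
    intro r hr
    have hsq : (fun y => u y ^ 2) = fun y => u y * u y := by funext y; ring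
    rw [hsq, lap_radial i0 (fun y => u y * u y) (hu.smooth.mul hu.smooth)
      (fun x y h => by rw [hurad x y h]) (fun r => U r * U r)
      (fun r => U1 r * U r + U r * U1 r)
      (fun r => (U2 r * U r + U1 r * U1 r) + (U1 r * U1 r + U r * U2 r)) (fun _ => rfl)
      (fun r => (dU r).mul (dU r))
      (fun r => ((dU1 r).mul (dU r)).add ((dU r).mul (dU1 r))) r hr]
    push_cast; ring
  have hUo : ∀ r, 0 < r → -(1 + 2 * U r ^ 2) * (U2 r + (m + 1) / r * U1 r)
      - 2 * U r * U1 r ^ 2 + ω * U r - U r ^ p = 0 := by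
    intro r hr
    have h := hu.solves (r • e)
    rw [lu r hr, luu r hr] at h
    change _ - U r * _ + ω * U r - U r ^ p = 0 at h
    linear_combination h
  have hVo : ∀ r, 0 < r → -(1 + 2 * U r ^ 2) * (V2 r + (m + 1) / r * V1 r)
      - 4 * U r * U1 r * V1 r + (ω - 4 * U r * (U2 r + (m + 1) / r * U1 r)
        - 2 * U1 r ^ 2 - p * U r ^ (p - 1)) * V r = 0 := by
    intro r hr
    have h := heq (r • e)
    unfold Lplus at h
    rw [lv r hr, luu r hr, luv r hr] at h
    change _ - 2 * U r * _ + ω * V r - (_ + p * U r ^ (p - 1)) * V r = 0 at h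
    linear_combination h
  obtain ⟨C0, hC0, δ0, hδ0, hb0⟩ := hu.decay 0
  obtain ⟨C1, hC1, δ1, hδ1, hb1⟩ := hu.decay 1
  obtain ⟨C2, hC2, δ2, hδ2, hb2⟩ := hu.decay 2
  have hexp : ∀ (a b c d r : ℝ), 0 ≤ r → 0 < a → a ≤ b → d ≤ c →
      a * Real.exp (-c * r) ≤ b * Real.exp (-d * r) := by
    intro a b c d r hr ha hab hcd
    have : -c * r ≤ -d * r := by nlinarith
    gcongr
    linarith
  have hU0b : ∀ r, 0 ≤ r → |U r| ≤ C0 + C1 + C2 := by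
    intro r hr
    have h1 := ray_bound e hen u hu.smooth 0 C0 δ0 hb0 r hr
    rw [iteratedDeriv_zero] at h1
    have h2 := hexp C0 (C0 + C1 + C2) δ0 0 r hr hC0 (by linarith) hδ0.le
    simp only [neg_zero, zero_mul, Real.exp_zero, mul_one] at h2
    exact le_trans h1 h2
  have hU1b : ∀ r, 0 ≤ r → |U1 r| ≤ (C0 + C1 + C2) * Real.exp (-(min δ1 δ2) * r) := by
    intro r hr
    exact le_trans (ray_bound e hen u hu.smooth 1 C1 δ1 hb1 r hr)
      (hexp _ _ _ _ r hr hC1 (by linarith) (min_le_left _ _))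
  have hU2b : ∀ r, 0 ≤ r → |U2 r| ≤ (C0 + C1 + C2) * Real.exp (-(min δ1 δ2) * r) := by
    intro r hr
    exact le_trans (ray_bound e hen u hu.smooth 2 C2 δ2 hb2 r hr)
      (hexp _ _ _ _ r hr hC2 (by linarith) (min_le_right _ _))
  have hE : ¬ ∃ R, 0 < R ∧ ∀ r, R ≤ r → 1 ≤ V r ^ 2 + V1 r ^ 2 :=
    not_large hN i0 v hv hrad hint V1 dV
  obtain ⟨x0, hx0⟩ := hne
  have hVx : ∀ x, V ‖x‖ = v x := fun x => hrad _ _ (by simp [norm_smul, hen])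
  have hCp : 0 < C0 + C1 + C2 := by positivity
  have hδp : 0 < min δ1 δ2 := lt_min hδ1 hδ2
  constructor
  · by_contra hcon
    push Not at hcon
    refine core_ode m ω p U U1 U2 U3 (fun r => -V r) (fun r => -V1 r) (fun r => -V2 r) dU dU1 dU2
      (fun r => (dV r).neg) (fun r => (dV1 r).neg) hpos hanti hUo ?_ _ _ hCp hδp hU0b hU1b hU2b
      ?_ ⟨‖x0‖, norm_nonneg _, ?_⟩ ?_
    · intro r hr
      linear_combination -(hVo r hr)
    · intro r _
      have := hcon (r • e)
      show 0 ≤ -v (r • e)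
      linarith
    · show -V ‖x0‖ ≠ 0
      rw [hVx]; exact neg_ne_zero.2 hx0
    · simpa only [neg_sq] using hE
  · by_contra hcon
    push Not at hcon
    exact core_ode m ω p U U1 U2 U3 V V1 V2 dU dU1 dU2
      dV dV1 hpos hanti hUo hVo _ _ hCp hδp hU0b hU1b hU2b
      (fun r _ => hcon _) ⟨‖x0‖, norm_nonneg _, by rw [hVx]; exact hx0⟩ hE

end
end

section
/- Let N ≥ 2 be an integer, ω > 0, and 1 < p < p_max, let u be a ground-state profile of (QLS), and let λ < ω be a real number. Then there is no sequence (φ_n) of smooth functions ℝ^N → ℂ such that: each φ_n together with all its first- and second-order partial derivatives is square-integrable on ℝ^N; ∫_{ℝ^N}|φ_n|² dx = 1 for every n; ∫_{ℝ^N} φ_n \overline{g} dx → 0 as n → ∞ for every square-integrable g : ℝ^N → ℂ (weak L² convergence of φ_n to 0); and ∫_{ℝ^N} |L₊φ_n − λφ_n|² dx → 0 as n → ∞. (In particular, the continuous spectrum of L₊ is contained in [ω, ∞).) -/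
open MeasureTheory Real Filter Topology

noncomputable section

/-- The linearized operator `L₊` acting on complex-valued functions. -/
def LplusC {N : ℕ} (ω p : ℝ) (u : EuclideanSpace ℝ (Fin N) → ℝ)
    (η : EuclideanSpace ℝ (Fin N) → ℂ) (x : EuclideanSpace ℝ (Fin N)) : ℂ :=
  -lap η x - 2 * (u x : ℂ) * lap (fun y => (u y : ℂ) * η y) x + (ω : ℂ) * η x
    - ((lap (fun y => (u y) ^ 2) x + p * u x ^ (p - 1) : ℝ) : ℂ) * η x

lemma jensen_sq {α : Type*} [MeasurableSpace α] (μ : Measure α) [IsProbabilityMeasure μ]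
    {g : α → ENNReal} (hg : AEMeasurable g μ) : (∫⁻ a, g a ∂μ) ^ 2 ≤ ∫⁻ a, g a ^ 2 ∂μ := by
  have h := ENNReal.lintegral_mul_le_Lp_mul_Lq μ (p := 2) (q := 2)
    (Real.holderConjugate_iff.2 ⟨by norm_num, by norm_num⟩) hg
    (g := fun _ => 1) aemeasurable_const
  simp only [Pi.mul_apply, mul_one, ENNReal.one_rpow, lintegral_const, measure_univ] at h
  have h2 := pow_le_pow_left₀ zero_le h 2
  refine h2.trans (le_of_eq ?_)
  rw [← ENNReal.rpow_natCast, ← ENNReal.rpow_mul]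
  norm_num

lemma trans_est {N : ℕ} {f : EuclideanSpace ℝ (Fin N) → ℂ} (hf : ContDiff ℝ (⊤ : ℕ∞) f)
    (y : EuclideanSpace ℝ (Fin N)) :
    ∫⁻ x, ‖f x - f (x + y)‖ₑ ^ 2 ≤ ‖y‖ₑ ^ 2 * ∫⁻ x, ‖fderiv ℝ f x‖ₑ ^ 2 := by
  have hd : Differentiable ℝ f := hf.differentiable (by simp)
  have hc : Continuous (fderiv ℝ f) := hf.continuous_fderiv (by simp)
  let μ : Measure ℝ := volume.restrict (Set.Ioc (0:ℝ) 1)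
  have : IsProbabilityMeasure μ := ⟨by simp [μ]⟩
  have key : ∀ x, ‖f x - f (x + y)‖ₑ ^ 2 ≤ ∫⁻ t, (‖y‖ₑ ^ 2 * ‖fderiv ℝ f (x + t • y)‖ₑ ^ 2) ∂μ := by
    intro x
    have hder : ∀ t : ℝ, HasDerivAt (fun t : ℝ => f (x + t • y)) (fderiv ℝ f (x + t • y) y) t := by
      intro t
      have h1 : HasDerivAt (fun t : ℝ => x + t • y) y t := by
        simpa using ((hasDerivAt_id t).smul_const y).const_add x
      exact (hd (x + t • y)).hasFDerivAt.comp_hasDerivAt t h1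
    have hcc : Continuous fun t : ℝ => fderiv ℝ f (x + t • y) y := by fun_prop
    have hint : ∫ t in (0:ℝ)..1, fderiv ℝ f (x + t • y) y = f (x + y) - f x := by
      rw [intervalIntegral.integral_eq_sub_of_hasDerivAt (fun t _ => hder t)
        (hcc.intervalIntegrable _ _)]
      simp
    rw [intervalIntegral.integral_of_le zero_le_one] at hint
    have e1 : ‖f x - f (x + y)‖ₑ = ‖∫ t, fderiv ℝ f (x + t • y) y ∂μ‖ₑ := by
      rw [hint, ← enorm_neg]; simp
    rw [e1]
    calc ‖∫ t, fderiv ℝ f (x + t • y) y ∂μ‖ₑ ^ 2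
        ≤ (∫⁻ t, ‖fderiv ℝ f (x + t • y) y‖ₑ ∂μ) ^ 2 := by
          gcongr; exact enorm_integral_le_lintegral_enorm _
      _ ≤ ∫⁻ t, ‖fderiv ℝ f (x + t • y) y‖ₑ ^ 2 ∂μ :=
          jensen_sq μ hcc.enorm.measurable.aemeasurable
      _ ≤ _ := by
          gcongr with t
          rw [← mul_pow, mul_comm]
          gcongr
          exact ContinuousLinearMap.le_opENorm _ _
  have hm : Measurable (fun z : EuclideanSpace ℝ (Fin N) × ℝ =>
      ‖y‖ₑ ^ 2 * ‖fderiv ℝ f (z.1 + z.2 • y)‖ₑ ^ 2) := by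
    have : Continuous (fun z : EuclideanSpace ℝ (Fin N) × ℝ => fderiv ℝ f (z.1 + z.2 • y)) := by
      fun_prop
    exact (this.enorm.measurable.pow_const 2).const_mul _
  calc ∫⁻ x, ‖f x - f (x + y)‖ₑ ^ 2
      ≤ ∫⁻ x, ∫⁻ t, (‖y‖ₑ ^ 2 * ‖fderiv ℝ f (x + t • y)‖ₑ ^ 2) ∂μ := lintegral_mono key
    _ = ∫⁻ t, (∫⁻ x, (‖y‖ₑ ^ 2 * ‖fderiv ℝ f (x + t • y)‖ₑ ^ 2)) ∂μ :=
        lintegral_lintegral_swap hm.aemeasurable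
    _ = ∫⁻ t, (‖y‖ₑ ^ 2 * ∫⁻ x, ‖fderiv ℝ f x‖ₑ ^ 2) ∂μ := by
        congr 1; ext t
        rw [lintegral_add_right_eq_self (μ := volume)
          (fun x => ‖y‖ₑ ^ 2 * ‖fderiv ℝ f x‖ₑ ^ 2) (t • y)]
        rw [lintegral_const_mul]
        exact hc.enorm.measurable.pow_const 2
    _ = _ := by simp

/-- normalised volume on the ball -/
def nuB (N : ℕ) (ε : ℝ) : Measure (EuclideanSpace ℝ (Fin N)) :=
  (volume (Metric.ball (0 : EuclideanSpace ℝ (Fin N)) ε))⁻¹ •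
    volume.restrict (Metric.ball (0 : EuclideanSpace ℝ (Fin N)) ε)

lemma volB_ne_zero (N : ℕ) {ε : ℝ} (hε : 0 < ε) :
    volume (Metric.ball (0 : EuclideanSpace ℝ (Fin N)) ε) ≠ 0 :=
  (Metric.measure_ball_pos _ _ hε).ne'

lemma volB_ne_top (N : ℕ) (ε : ℝ) :
    volume (Metric.ball (0 : EuclideanSpace ℝ (Fin N)) ε) ≠ ⊤ := measure_ball_lt_top.ne

lemma nuB_prob (N : ℕ) {ε : ℝ} (hε : 0 < ε) : IsProbabilityMeasure (nuB N ε) := ⟨by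
  simp only [nuB, Measure.smul_apply, Measure.restrict_apply_univ, smul_eq_mul]
  exact ENNReal.inv_mul_cancel (volB_ne_zero N hε) (volB_ne_top N ε)⟩

/-- averaging operator -/
def avg {N : ℕ} (ε : ℝ) (f : EuclideanSpace ℝ (Fin N) → ℂ) (x : EuclideanSpace ℝ (Fin N)) : ℂ :=
  ∫ y, f (x + y) ∂(nuB N ε)

lemma nuB_integrable {N : ℕ} {ε : ℝ} (hε : 0 < ε) {f : EuclideanSpace ℝ (Fin N) → ℂ}
    (hf : Continuous f) (x : EuclideanSpace ℝ (Fin N)) :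
    Integrable (fun y => f (x + y)) (nuB N ε) := by
  apply Integrable.smul_measure _ (ENNReal.inv_ne_top.2 (volB_ne_zero N hε))
  have h : Continuous fun y => f (x + y) := by fun_prop
  exact (h.continuousOn.integrableOn_compact (isCompact_closedBall 0 ε)).mono_set
    Metric.ball_subset_closedBall

lemma avg_est {N : ℕ} {ε : ℝ} (hε : 0 < ε) {f : EuclideanSpace ℝ (Fin N) → ℂ}
    (hf : ContDiff ℝ (⊤ : ℕ∞) f) :
    ∫⁻ x, ‖f x - avg ε f x‖ₑ ^ 2 ≤ ENNReal.ofReal ε ^ 2 * ∫⁻ x, ‖fderiv ℝ f x‖ₑ ^ 2 := by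
  have := nuB_prob N hε
  have hc := hf.continuous
  have hm : Measurable (fun z : EuclideanSpace ℝ (Fin N) × EuclideanSpace ℝ (Fin N) =>
      ‖f z.1 - f (z.1 + z.2)‖ₑ ^ 2) := by
    have : Continuous (fun z : EuclideanSpace ℝ (Fin N) × EuclideanSpace ℝ (Fin N) =>
      f z.1 - f (z.1 + z.2)) := by fun_prop
    exact this.enorm.measurable.pow_const 2
  calc ∫⁻ x, ‖f x - avg ε f x‖ₑ ^ 2
      ≤ ∫⁻ x, ∫⁻ y, ‖f x - f (x + y)‖ₑ ^ 2 ∂(nuB N ε) := by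
        apply lintegral_mono
        intro x
        have e : f x - avg ε f x = ∫ y, (f x - f (x + y)) ∂(nuB N ε) := by
          rw [integral_sub (integrable_const _) (nuB_integrable hε hc x)]
          simp [avg]
        simp only [e]
        have hcc : Continuous fun y => f x - f (x + y) := by fun_prop
        refine le_trans ?_ (jensen_sq _ hcc.enorm.measurable.aemeasurable)
        gcongr
        exact enorm_integral_le_lintegral_enorm _
    _ = ∫⁻ y, (∫⁻ x, ‖f x - f (x + y)‖ₑ ^ 2) ∂(nuB N ε) := lintegral_lintegral_swap hm.aemeasurable
    _ ≤ ∫⁻ y, (ENNReal.ofReal ε ^ 2 * ∫⁻ x, ‖fderiv ℝ f x‖ₑ ^ 2) ∂(nuB N ε) := by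
        apply lintegral_mono_ae
        have : ∀ᵐ y ∂(nuB N ε), y ∈ Metric.ball (0 : EuclideanSpace ℝ (Fin N)) ε := by
          apply Measure.ae_smul_measure
          exact ae_restrict_mem measurableSet_ball
        filter_upwards [this] with y hy
        refine (trans_est hf y).trans ?_
        gcongr
        rw [← ofReal_norm]
        exact ENNReal.ofReal_le_ofReal (mem_ball_zero_iff.1 hy).le
    _ = _ := by simp

lemma avg_bound {N : ℕ} {ε : ℝ} (hε : 0 < ε) {f : EuclideanSpace ℝ (Fin N) → ℂ}
    (hf : Continuous f) (x : EuclideanSpace ℝ (Fin N)) :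
    ‖avg ε f x‖ₑ ^ 2 ≤ (volume (Metric.ball (0 : EuclideanSpace ℝ (Fin N)) ε))⁻¹ *
      ∫⁻ x, ‖f x‖ₑ ^ 2 := by
  have := nuB_prob N hε
  have hcc : Continuous fun y => f (x + y) := by fun_prop
  calc ‖avg ε f x‖ₑ ^ 2 ≤ (∫⁻ y, ‖f (x + y)‖ₑ ∂(nuB N ε)) ^ 2 := by
        gcongr; exact enorm_integral_le_lintegral_enorm _
    _ ≤ ∫⁻ y, ‖f (x + y)‖ₑ ^ 2 ∂(nuB N ε) := jensen_sq _ hcc.enorm.measurable.aemeasurable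
    _ ≤ _ := by
        rw [nuB, lintegral_smul_measure, smul_eq_mul]
        refine mul_le_mul' le_rfl ?_
        refine (setLIntegral_le_lintegral _ _).trans (le_of_eq ?_)
        exact lintegral_add_left_eq_self (μ := volume) (fun y => ‖f y‖ₑ ^ 2) x

lemma avg_tendsto {N : ℕ} {ε : ℝ}  {φ : ℕ → EuclideanSpace ℝ (Fin N) → ℂ}
    (hw : ∀ g : EuclideanSpace ℝ (Fin N) → ℂ, Integrable (fun x => ‖g x‖ ^ 2) →
        Tendsto (fun n => ∫ x, φ n x * (starRingEnd ℂ) (g x)) atTop (𝓝 0))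
    (x : EuclideanSpace ℝ (Fin N)) :
    Tendsto (fun n => avg ε (φ n) x) atTop (𝓝 0) := by
  have h := hw ((Metric.ball x ε).indicator (fun _ => 1)) (by
    have : (fun z => ‖(Metric.ball x ε).indicator (fun _ => (1:ℂ)) z‖ ^ 2)
        = (Metric.ball x ε).indicator (fun _ => (1:ℝ)) := by
      ext z; by_cases hz : z ∈ Metric.ball x ε <;> simp [hz]
    rw [this]
    exact (integrable_indicator_iff measurableSet_ball).2
      (integrableOn_const measure_ball_lt_top.ne))
  have h2 := h.const_smul (((volume (Metric.ball (0 : EuclideanSpace ℝ (Fin N)) ε))⁻¹).toReal)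
  rw [smul_zero] at h2
  refine h2.congr fun n => ?_
  rw [avg, nuB, integral_smul_measure]
  congr 1
  rw [← integral_indicator measurableSet_ball,
    ← integral_add_left_eq_self (μ := volume) (fun z => φ n z * (starRingEnd ℂ) _) x]
  congr 1; ext y
  by_cases hy : y ∈ Metric.ball (0 : EuclideanSpace ℝ (Fin N)) ε
  · have : x + y ∈ Metric.ball x ε := by simpa using hy
    rw [Set.indicator_of_mem hy, Set.indicator_of_mem this]; simp
  · have : x + y ∉ Metric.ball x ε := by simpa using hy
    rw [Set.indicator_of_notMem hy, Set.indicator_of_notMem this]; simp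

lemma avg_measurable {N : ℕ} {ε : ℝ} (hε : 0 < ε) {f : EuclideanSpace ℝ (Fin N) → ℂ}
    (hf : Continuous f) : StronglyMeasurable (avg ε f) := by
  have := nuB_prob N hε
  have : Continuous (fun z : EuclideanSpace ℝ (Fin N) × EuclideanSpace ℝ (Fin N) =>
      f (z.1 + z.2)) := by fun_prop
  exact this.stronglyMeasurable.integral_prod_right

lemma rellich {N : ℕ} {V : EuclideanSpace ℝ (Fin N) → ℝ} (hV : Integrable V)
    (hVm : Measurable V) {M : ℝ} (hM : ∀ x, |V x| ≤ M) {φ : ℕ → EuclideanSpace ℝ (Fin N) → ℂ}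
    (hφ : ∀ n, ContDiff ℝ (⊤ : ℕ∞) (φ n)) (h1 : ∀ n, ∫⁻ x, ‖φ n x‖ₑ ^ 2 ≤ 1)
    {G : ℝ} (hG : ∀ᶠ n in atTop, ∫⁻ x, ‖fderiv ℝ (φ n) x‖ₑ ^ 2 ≤ ENNReal.ofReal G)
    (hw : ∀ g : EuclideanSpace ℝ (Fin N) → ℂ, Integrable (fun x => ‖g x‖ ^ 2) →
        Tendsto (fun n => ∫ x, φ n x * (starRingEnd ℂ) (g x)) atTop (𝓝 0))
    {η : ℝ} (hη : 0 < η) :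
    ∀ᶠ n in atTop, ∫⁻ x, ‖V x‖ₑ * ‖φ n x‖ₑ ^ 2 ≤ ENNReal.ofReal η := by
  have hM0 : 0 ≤ M := (abs_nonneg _).trans (hM 0)
  obtain ⟨ε, hε, hεη⟩ : ∃ ε : ℝ, 0 < ε ∧ 2 * M * (ε ^ 2 * max G 0) ≤ η / 2 := by
    have : Tendsto (fun ε : ℝ => 2 * M * (ε ^ 2 * max G 0)) (𝓝[>] 0) (𝓝 0) := by
      have : Continuous (fun ε : ℝ => 2 * M * (ε ^ 2 * max G 0)) := by fun_prop
      simpa using (this.tendsto 0).mono_left (nhdsWithin_le_nhds (s := Set.Ioi 0))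
    have h2 := (this.eventually (ge_mem_nhds (half_pos hη))).and self_mem_nhdsWithin
    obtain ⟨ε, h, h'⟩ := h2.exists
    exact ⟨ε, h', h⟩
  have hsq : ∀ a b : ℂ, ‖a‖ₑ ^ 2 ≤ 2 * ‖a - b‖ₑ ^ 2 + 2 * ‖b‖ₑ ^ 2 := by
    intro a b
    have : ‖a‖ ^ 2 ≤ 2 * ‖a - b‖ ^ 2 + 2 * ‖b‖ ^ 2 := by
      have : ‖a‖ ≤ ‖a - b‖ + ‖b‖ := by simpa using norm_add_le (a - b) b
      nlinarith [norm_nonneg a, norm_nonneg b, norm_nonneg (a - b), sq_nonneg (‖a - b‖ - ‖b‖)]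
    have h := ENNReal.ofReal_le_ofReal this
    rw [ENNReal.ofReal_add (by positivity) (by positivity), ENNReal.ofReal_mul (by norm_num),
      ENNReal.ofReal_mul (by norm_num), ENNReal.ofReal_pow (norm_nonneg _),
      ENNReal.ofReal_pow (norm_nonneg _), ENNReal.ofReal_pow (norm_nonneg _)] at h
    simpa [ofReal_norm] using h
  have hT : Tendsto (fun n => ∫⁻ x, ‖V x‖ₑ * (2 * ‖avg ε (φ n) x‖ₑ ^ 2)) atTop (𝓝 0) := by
    have := tendsto_lintegral_of_dominated_convergence (μ := volume)
      (F := fun n x => ‖V x‖ₑ * (2 * ‖avg ε (φ n) x‖ₑ ^ 2)) (f := fun _ => 0)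
      (fun x => ‖V x‖ₑ * (2 * (volume (Metric.ball (0 : EuclideanSpace ℝ (Fin N)) ε))⁻¹))
      ?_ ?_ ?_ ?_
    · simpa using this
    · intro n
      have := (avg_measurable hε (hφ n).continuous).enorm
      exact hVm.enorm.mul ((this.pow_const 2).const_mul 2)
    · intro n
      refine ae_of_all _ fun x => ?_
      simp only
      gcongr
      refine (avg_bound hε (hφ n).continuous x).trans ?_
      calc _ ≤ _ * (1 : ENNReal) := by gcongr; exact h1 n
        _ = _ := mul_one _
    · rw [lintegral_mul_const _ hVm.enorm]
      exact ENNReal.mul_ne_top hV.2.ne (ENNReal.mul_ne_top (by simp)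
        (ENNReal.inv_ne_top.2 (volB_ne_zero N hε)))
    · refine ae_of_all _ fun x => ?_
      have h := (avg_tendsto (ε := ε) hw x).enorm
      have h2 := (ENNReal.continuous_pow 2).tendsto _ |>.comp h
      have h3 := ENNReal.Tendsto.const_mul (a := ‖V x‖ₑ * 2) h2 (Or.inr (by finiteness))
      simpa [Function.comp_def, mul_assoc] using h3
  have hT2 := hT.eventually (ge_mem_nhds
    (show (0 : ENNReal) < ENNReal.ofReal (η / 2) by simpa using hη))
  filter_upwards [hT2, hG] with n hn hGn
  have hc := (hφ n).continuous
  have hma : Measurable (fun x => ‖φ n x - avg ε (φ n) x‖ₑ) :=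
    (hc.stronglyMeasurable.sub (avg_measurable hε hc)).enorm
  calc ∫⁻ x, ‖V x‖ₑ * ‖φ n x‖ₑ ^ 2
      ≤ ∫⁻ x, (ENNReal.ofReal M * 2) * ‖φ n x - avg ε (φ n) x‖ₑ ^ 2
          + ‖V x‖ₑ * (2 * ‖avg ε (φ n) x‖ₑ ^ 2) := by
        apply lintegral_mono
        intro x
        calc ‖V x‖ₑ * ‖φ n x‖ₑ ^ 2
          ≤ ‖V x‖ₑ * (2 * ‖φ n x - avg ε (φ n) x‖ₑ ^ 2 + 2 * ‖avg ε (φ n) x‖ₑ ^ 2) := by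
              gcongr; exact hsq _ _
          _ ≤ (ENNReal.ofReal M * 2) * ‖φ n x - avg ε (φ n) x‖ₑ ^ 2
              + ‖V x‖ₑ * (2 * ‖avg ε (φ n) x‖ₑ ^ 2) := by
              rw [mul_add, ← mul_assoc]
              gcongr
              rw [← ofReal_norm]
              exact ENNReal.ofReal_le_ofReal (hM x)
    _ = (ENNReal.ofReal M * 2) * (∫⁻ x, ‖φ n x - avg ε (φ n) x‖ₑ ^ 2)
          + ∫⁻ x, ‖V x‖ₑ * (2 * ‖avg ε (φ n) x‖ₑ ^ 2) := by
        rw [lintegral_add_left ((hma.pow_const 2).const_mul _),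
          lintegral_const_mul _ (hma.pow_const 2)]
    _ ≤ (ENNReal.ofReal M * 2) * (ENNReal.ofReal ε ^ 2 * ENNReal.ofReal (max G 0))
          + ENNReal.ofReal (η / 2) := by
        gcongr
        refine (avg_est hε (hφ n)).trans ?_
        gcongr
        exact hGn.trans (ENNReal.ofReal_le_ofReal (le_max_left _ _))
    _ = ENNReal.ofReal (2 * M * (ε ^ 2 * max G 0)) + ENNReal.ofReal (η / 2) := by
        rw [ENNReal.ofReal_mul (by positivity), ENNReal.ofReal_mul (by positivity),
          ENNReal.ofReal_mul (by positivity), ENNReal.ofReal_pow hε.le]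
        simp [mul_comm]
    _ ≤ ENNReal.ofReal (η / 2) + ENNReal.ofReal (η / 2) := by
        gcongr
    _ = _ := by rw [← ENNReal.ofReal_add (by positivity) (by positivity)]; simp

section pdlemmas
variable {N : ℕ} {F : Type*} [NormedAddCommGroup F] [NormedSpace ℝ F]

lemma pd_contDiff {f : EuclideanSpace ℝ (Fin N) → F} (hf : ContDiff ℝ (⊤ : ℕ∞) f) (i : Fin N) :
    ContDiff ℝ (⊤ : ℕ∞) (pd i f) := by
  have : ContDiff ℝ (⊤ : ℕ∞) (fderiv ℝ f) := hf.fderiv_right (by simp)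
  exact this.clm_apply contDiff_const

lemma norm_pd_le (f : EuclideanSpace ℝ (Fin N) → F) (i : Fin N) (x : EuclideanSpace ℝ (Fin N)) :
    ‖pd i f x‖ ≤ ‖iteratedFDeriv ℝ 1 f x‖ := by
  rw [norm_iteratedFDeriv_one]
  refine (ContinuousLinearMap.le_opNorm _ _).trans ?_
  simp

lemma norm_pd_pd_le {f : EuclideanSpace ℝ (Fin N) → F} (hf : ContDiff ℝ (⊤ : ℕ∞) f) (i j : Fin N)
    (x : EuclideanSpace ℝ (Fin N)) :
    ‖pd i (pd j f) x‖ ≤ ‖iteratedFDeriv ℝ 2 f x‖ := by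
  have h1 : ContDiff ℝ (⊤ : ℕ∞) (fderiv ℝ f) := hf.fderiv_right (by simp)
  have h2 : DifferentiableAt ℝ (fderiv ℝ f) x := h1.differentiable (by simp) x
  have : pd i (pd j f) x = iteratedFDeriv ℝ 2 f x
      ![EuclideanSpace.single i 1, EuclideanSpace.single j 1] := by
    rw [iteratedFDeriv_two_apply]
    simp only [pd]
    change fderiv ℝ (fun y => fderiv ℝ f y (EuclideanSpace.single j 1)) x _ = _
    rw [fderiv_clm_apply h2 (differentiableAt_const _)]
    simp
  rw [this]
  refine (ContinuousMultilinearMap.le_opNorm _ _).trans ?_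
  simp [Fin.prod_univ_two]

lemma pd_mul {u : EuclideanSpace ℝ (Fin N) → ℝ} {f : EuclideanSpace ℝ (Fin N) → ℂ}
    (hu : ContDiff ℝ (⊤ : ℕ∞) u) (hf : ContDiff ℝ (⊤ : ℕ∞) f) (i : Fin N) :
    pd i (fun y => (u y : ℂ) * f y) = fun x => ((pd i u x : ℝ) : ℂ) * f x + (u x : ℂ) * pd i f x := by
  ext x
  have h1 : DifferentiableAt ℝ u x := hu.differentiable (by simp) x
  have h2 : DifferentiableAt ℝ f x := hf.differentiable (by simp) x
  have h := (h1.hasFDerivAt.smul h2.hasFDerivAt).fderiv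
  simp only [pd]
  have e : (fun y => (u y : ℂ) * f y) = u • f := by
    ext y; simp
  rw [e, h]
  simp [add_comm]

lemma pd_add {f g : EuclideanSpace ℝ (Fin N) → F}
    (hf : ContDiff ℝ (⊤ : ℕ∞) f) (hg : ContDiff ℝ (⊤ : ℕ∞) g) (i : Fin N) :
    pd i (fun y => f y + g y) = fun x => pd i f x + pd i g x := by
  ext x
  have h1 : DifferentiableAt ℝ f x := hf.differentiable (by simp) x
  have h2 : DifferentiableAt ℝ g x := hg.differentiable (by simp) x
  simp only [pd]
  rw [fderiv_fun_add h1 h2]; simp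

lemma ofReal_contDiff {u : EuclideanSpace ℝ (Fin N) → ℝ} (hu : ContDiff ℝ (⊤ : ℕ∞) u) :
    ContDiff ℝ (⊤ : ℕ∞) (fun y => (u y : ℂ)) := Complex.ofRealCLM.contDiff.comp hu

lemma pd_pd_mul {u : EuclideanSpace ℝ (Fin N) → ℝ} {f : EuclideanSpace ℝ (Fin N) → ℂ}
    (hu : ContDiff ℝ (⊤ : ℕ∞) u) (hf : ContDiff ℝ (⊤ : ℕ∞) f) (i : Fin N) :
    pd i (pd i (fun y => (u y : ℂ) * f y)) = fun x => (((pd i (pd i u) x : ℝ) : ℂ) * f x +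
      ((pd i u x : ℝ) : ℂ) * pd i f x) + (((pd i u x : ℝ) : ℂ) * pd i f x + (u x : ℂ) * pd i (pd i f) x) := by
  rw [pd_mul hu hf, pd_add ((ofReal_contDiff (pd_contDiff hu i)).mul hf)
    ((ofReal_contDiff hu).mul (pd_contDiff hf i)), pd_mul (pd_contDiff hu i) hf,
    pd_mul hu (pd_contDiff hf i)]

lemma pd_pd_sq {u : EuclideanSpace ℝ (Fin N) → ℝ}
    (hu : ContDiff ℝ (⊤ : ℕ∞) u) (i : Fin N) :
    pd i (pd i (fun y => u y ^ 2)) = fun x => 2 * (pd i u x) ^ 2 + 2 * u x * pd i (pd i u) x := by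
  have key : ∀ {a b : EuclideanSpace ℝ (Fin N) → ℝ}, ContDiff ℝ (⊤ : ℕ∞) a →
      ContDiff ℝ (⊤ : ℕ∞) b → pd i (fun y => a y * b y) =
        fun x => a x * pd i b x + b x * pd i a x := by
    intro a b ha hb
    ext x
    have h1 : DifferentiableAt ℝ a x := ha.differentiable (by simp) x
    have h2 : DifferentiableAt ℝ b x := hb.differentiable (by simp) x
    simp only [pd]
    rw [fderiv_fun_mul h1 h2]; simp
  have e : (fun y => u y ^ 2) = fun y => u y * u y := by ext y; ring
  have hi := pd_contDiff hu i
  rw [e, key hu hu, pd_add (hu.mul hi) (hu.mul hi), key hu hi]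
  ext x; ring

lemma fderiv_sq_le (f : EuclideanSpace ℝ (Fin N) → ℂ) (x : EuclideanSpace ℝ (Fin N)) :
    ‖fderiv ℝ f x‖ ^ 2 ≤ ∑ i, ‖pd i f x‖ ^ 2 := by
  have h0 : 0 ≤ ∑ i, ‖pd i f x‖ ^ 2 := by positivity
  rw [← Real.le_sqrt (norm_nonneg _) h0]
  refine ContinuousLinearMap.opNorm_le_bound _ (Real.sqrt_nonneg _) fun y => ?_
  have hy : y = ∑ i, y i • EuclideanSpace.single i (1 : ℝ) := by
    ext j
    simp [Finset.sum_apply, Pi.single_apply]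
  calc ‖fderiv ℝ f x y‖ = ‖∑ i, y i • pd i f x‖ := by
        conv_lhs => rw [hy]
        simp [pd]
    _ ≤ ∑ i, ‖pd i f x‖ * ‖y i‖ := by
        refine (norm_sum_le _ _).trans (le_of_eq ?_)
        refine Finset.sum_congr rfl fun i _ => ?_
        rw [norm_smul, mul_comm]
    _ ≤ √(∑ i, ‖pd i f x‖ ^ 2) * √(∑ i, ‖y i‖ ^ 2) := Real.sum_mul_le_sqrt_mul_sqrt _ _ _
    _ = _ := by rw [EuclideanSpace.norm_eq]

lemma pd_conj (f : EuclideanSpace ℝ (Fin N) → ℂ) (i : Fin N) (x : EuclideanSpace ℝ (Fin N)) :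
    fderiv ℝ (fun y => (starRingEnd ℂ) (f y)) x (EuclideanSpace.single i 1)
      = (starRingEnd ℂ) (pd i f x) := by
  have := (Complex.conjCLE.comp_fderiv (f := f) (x := x))
  change fderiv ℝ (Complex.conjCLE ∘ f) x _ = _
  rw [this]; simp [pd]

lemma memLp_conj_mul {f g : EuclideanSpace ℝ (Fin N) → ℂ} (hf : MemLp f 2) (hg : MemLp g 2) :
    Integrable (fun x => (starRingEnd ℂ) (f x) * g x) := by
  have : MemLp (fun x => (starRingEnd ℂ) (f x)) 2 := hf.star
  exact this.integrable_mul hg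

lemma green_i {f : EuclideanSpace ℝ (Fin N) → ℂ} (hf : ContDiff ℝ (⊤ : ℕ∞) f) (i : Fin N)
    (h0 : MemLp f 2) (h1 : MemLp (pd i f) 2) (h2 : MemLp (pd i (pd i f)) 2) :
    ∫ x, ((starRingEnd ℂ) (f x) * pd i (pd i f) x).re = - ∫ x, ‖pd i f x‖ ^ 2 := by
  have hfd : Differentiable ℝ f := hf.differentiable (by simp)
  have hc : Differentiable ℝ (fun y => (starRingEnd ℂ) (f y)) :=
    Complex.conjCLE.differentiable.comp hfd
  have H := integral_mul_fderiv_eq_neg_fderiv_mul_of_integrable (μ := volume) (𝕜 := ℂ)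
    (f := fun y => (starRingEnd ℂ) (f y)) (g := pd i f) (v := EuclideanSpace.single i 1)
    (by simpa only [pd_conj] using memLp_conj_mul h1 h1)
    (memLp_conj_mul h0 h2) (memLp_conj_mul h0 h1) (fun x _ => hc x)
    (fun x _ => (pd_contDiff hf i).differentiable (by simp) x)
  simp only [pd_conj] at H
  have H2 := congrArg Complex.re H
  rw [Complex.neg_re] at H2
  have r1 := integral_re (𝕜 := ℂ) (memLp_conj_mul h0 h2)
  have r2 := integral_re (𝕜 := ℂ) (memLp_conj_mul h1 h1)
  simp only [RCLike.re_to_complex] at r1 r2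
  rw [r1]
  refine H2.trans ?_
  rw [← r2]
  congr 2; ext x
  rw [← Complex.normSq_eq_conj_mul_self, Complex.normSq_eq_norm_sq]
  simp
  norm_cast

lemma green {f : EuclideanSpace ℝ (Fin N) → ℂ} (hf : ContDiff ℝ (⊤ : ℕ∞) f)
    (h0 : MemLp f 2) (h1 : ∀ i, MemLp (pd i f) 2) (h2 : ∀ i, MemLp (pd i (pd i f)) 2) :
    Integrable (fun x => ((starRingEnd ℂ) (f x) * lap f x).re) ∧
    ∫ x, ((starRingEnd ℂ) (f x) * lap f x).re = - ∑ i, ∫ x, ‖pd i f x‖ ^ 2 := by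
  have hi : ∀ i, Integrable (fun x => ((starRingEnd ℂ) (f x) * pd i (pd i f) x).re) :=
    fun i => (memLp_conj_mul h0 (h2 i)).re
  simp only [lap, Finset.mul_sum, Complex.re_sum]
  refine ⟨integrable_finsetSum _ fun i _ => hi i, ?_⟩
  rw [integral_finsetSum _ fun i _ => hi i, ← Finset.sum_neg_distrib]
  exact Finset.sum_congr rfl fun i _ => green_i hf i h0 (h1 i) (h2 i)

end pdlemmas

lemma integrable_exp_norm {N : ℕ} (hN : 2 ≤ N) {δ : ℝ} (hδ : 0 < δ) :
    Integrable (fun x : EuclideanSpace ℝ (Fin N) => Real.exp (-δ * ‖x‖)) := by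
  have : Nontrivial (EuclideanSpace ℝ (Fin N)) := by
    apply Module.nontrivial_of_finrank_pos (R := ℝ)
    simp; omega
  rw [integrable_fun_norm_addHaar (μ := volume) (f := fun r => Real.exp (-δ * r))]
  have h := integrableOn_rpow_mul_exp_neg_mul_rpow (s := ((N - 1 : ℕ) : ℝ)) (p := 1)
    (by have : (0:ℝ) ≤ ((N - 1 : ℕ) : ℝ) := by positivity
        linarith) one_pos hδ
  refine h.congr_fun (fun x hx => ?_) measurableSet_Ioi
  simp

lemma u_bounds {N : ℕ} {ω p : ℝ} {u : EuclideanSpace ℝ (Fin N) → ℝ} (hu : IsGroundState N ω p u) :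
    ∃ B > 0, ∃ δ > 0, ∀ x, |u x| ≤ B * Real.exp (-δ * ‖x‖) ∧
      (∀ i, |pd i u x| ≤ B * Real.exp (-δ * ‖x‖)) ∧
      (∀ i, |pd i (pd i u) x| ≤ B * Real.exp (-δ * ‖x‖)) := by
  obtain ⟨C0, hC0, d0, hd0, h0⟩ := hu.decay 0
  obtain ⟨C1, hC1, d1, hd1, h1⟩ := hu.decay 1
  obtain ⟨C2, hC2, d2, hd2, h2⟩ := hu.decay 2
  have key : ∀ C d : ℝ, 0 < C → C ≤ C0 + C1 + C2 → min d0 (min d1 d2) ≤ d →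
      ∀ x : EuclideanSpace ℝ (Fin N), C * Real.exp (-d * ‖x‖) ≤
        (C0 + C1 + C2) * Real.exp (-(min d0 (min d1 d2)) * ‖x‖) := by
    intro C d hC hC' hd x
    gcongr
  refine ⟨C0 + C1 + C2, by positivity, min d0 (min d1 d2), by positivity, fun x => ⟨?_, ?_, ?_⟩⟩
  · refine le_trans ?_ (key C0 d0 hC0 (by linarith) (by simp) x)
    simpa using h0 x
  · intro i
    refine le_trans ?_ (key C1 d1 hC1 (by linarith) (by simp) x)
    exact (norm_pd_le u i x).trans (h1 x)
  · intro i
    refine le_trans ?_ (key C2 d2 hC2 (by linarith) (by simp) x)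
    exact (norm_pd_pd_le hu.smooth i i x).trans (h2 x)

/-- the potential -/
def Vpot {N : ℕ} (p : ℝ) (u : EuclideanSpace ℝ (Fin N) → ℝ) (x : EuclideanSpace ℝ (Fin N)) : ℝ :=
  lap (fun y => (u y) ^ 2) x + p * u x ^ (p - 1)

lemma lap_continuous {N : ℕ} {F : Type*} [NormedAddCommGroup F] [NormedSpace ℝ F]
    {f : EuclideanSpace ℝ (Fin N) → F} (hf : ContDiff ℝ (⊤ : ℕ∞) f) : Continuous (lap f) :=
  continuous_finsetSum _ fun i _ => (pd_contDiff (pd_contDiff hf i) i).continuous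

lemma V_facts {N : ℕ} (hN : 2 ≤ N) {ω p : ℝ} (hp : 1 < p) {u : EuclideanSpace ℝ (Fin N) → ℝ}
    (hu : IsGroundState N ω p u) :
    ∃ M, Continuous (Vpot p u) ∧ Integrable (Vpot p u) ∧ ∀ x, |Vpot p u x| ≤ M := by
  obtain ⟨B, hB, δ, hδ, hb⟩ := u_bounds hu
  have hcont : Continuous (Vpot p u) := by
    refine (lap_continuous (hu.smooth.pow 2)).add (continuous_const.mul ?_)
    exact hu.smooth.continuous.rpow_const fun x => Or.inl (hu.pos x).ne'
  set d := min δ (δ * (p - 1)) with hd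
  have hd0 : 0 < d := lt_min hδ (mul_pos hδ (by linarith))
  set K := (N : ℝ) * (4 * B ^ 2) + p * B ^ (p - 1) with hK
  have hK0 : 0 ≤ K := by positivity
  have hbound : ∀ x, |Vpot p u x| ≤ K * Real.exp (-d * ‖x‖) := by
    intro x
    obtain ⟨b0, b1, b2⟩ := hb x
    have he1 : Real.exp (-δ * ‖x‖) ≤ 1 := by
      apply Real.exp_le_one_iff.2
      nlinarith [norm_nonneg x]
    have he : 0 < Real.exp (-δ * ‖x‖) := Real.exp_pos _
    have hed : Real.exp (-δ * ‖x‖) ≤ Real.exp (-d * ‖x‖) := by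
      gcongr; exact min_le_left _ _
    have hed2 : Real.exp (-δ * ‖x‖) ^ (p - 1) ≤ Real.exp (-d * ‖x‖) := by
      rw [← Real.exp_mul]
      apply Real.exp_le_exp.2
      have : d ≤ δ * (p - 1) := min_le_right _ _
      nlinarith [norm_nonneg x]
    set e := Real.exp (-δ * ‖x‖)
    set e' := Real.exp (-d * ‖x‖)
    have p1 : |lap (fun y => (u y) ^ 2) x| ≤ (N : ℝ) * (4 * B ^ 2) * e' := by
      calc |lap (fun y => (u y) ^ 2) x| ≤ ∑ i : Fin N, |pd i (pd i (fun y => u y ^ 2)) x| :=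
            Finset.abs_sum_le_sum_abs _ _
        _ ≤ ∑ i : Fin N, (4 * B ^ 2) * e' := by
            apply Finset.sum_le_sum
            intro i _
            rw [pd_pd_sq hu.smooth i]
            have q1 : |pd i u x| ^ 2 ≤ B ^ 2 * e' := by
              calc |pd i u x| ^ 2 ≤ (B * e) ^ 2 := by gcongr; exact b1 i
                _ = B ^ 2 * (e * e) := by ring
                _ ≤ B ^ 2 * (1 * e') := by gcongr
                _ = _ := by ring
            have q2 : |u x| * |pd i (pd i u) x| ≤ B ^ 2 * e' := by
              calc |u x| * |pd i (pd i u) x| ≤ (B * e) * (B * e) := by gcongr; exact b2 i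
                _ = B ^ 2 * (e * e) := by ring
                _ ≤ B ^ 2 * (1 * e') := by gcongr
                _ = _ := by ring
            refine (abs_add_le _ _).trans ?_
            rw [abs_mul, abs_mul, abs_mul, abs_pow, abs_two]
            linarith
        _ = _ := by simp; ring
    have p2 : |p * u x ^ (p - 1)| ≤ p * B ^ (p - 1) * e' := by
      have h3 : u x ≤ B * e := (le_abs_self _).trans b0
      rw [abs_of_nonneg (mul_nonneg (by linarith) (Real.rpow_nonneg (hu.pos x).le _)), mul_assoc]
      gcongr
      calc u x ^ (p - 1) ≤ (B * e) ^ (p - 1) :=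
            Real.rpow_le_rpow (hu.pos x).le h3 (by linarith)
        _ = B ^ (p - 1) * e ^ (p - 1) := Real.mul_rpow hB.le he.le
        _ ≤ _ := by gcongr
    calc |Vpot p u x| ≤ _ := abs_add_le _ _
      _ ≤ K * e' := by rw [hK, add_mul]; exact add_le_add p1 p2
  refine ⟨K, hcont, ?_, fun x => (hbound x).trans ?_⟩
  · exact ((integrable_exp_norm hN hd0).const_mul K).mono' hcont.aestronglyMeasurable
      (ae_of_all _ hbound)
  · have : Real.exp (-d * ‖x‖) ≤ 1 := by
      apply Real.exp_le_one_iff.2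
      nlinarith [norm_nonneg x]
    nlinarith

lemma bmul {N : ℕ} {a : EuclideanSpace ℝ (Fin N) → ℝ} (ha : Continuous a) {B : ℝ}
    (hB : ∀ x, |a x| ≤ B) {g : EuclideanSpace ℝ (Fin N) → ℂ} (hg : MemLp g 2) :
    MemLp (fun x => (a x : ℂ) * g x) 2 := by
  refine hg.of_le_mul (c := B) ?_ (ae_of_all _ fun x => ?_)
  · exact (Complex.continuous_ofReal.comp ha).aestronglyMeasurable.mul hg.1
  · rw [norm_mul, Complex.norm_real]
    gcongr
    exact hB x

lemma energy {N : ℕ} {ω p lam : ℝ} (hlam : lam < ω) {u : EuclideanSpace ℝ (Fin N) → ℝ}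
    (hu : ContDiff ℝ (⊤ : ℕ∞) u) {B M : ℝ} (hb0 : ∀ x, |u x| ≤ B)
    (hb1 : ∀ i x, |pd i u x| ≤ B) (hb2 : ∀ i x, |pd i (pd i u) x| ≤ B)
    (hV : Continuous (Vpot p u)) (hM : ∀ x, |Vpot p u x| ≤ M)
    {f : EuclideanSpace ℝ (Fin N) → ℂ} (hf : ContDiff ℝ (⊤ : ℕ∞) f)
    (h0 : MemLp f 2) (h1 : ∀ i, MemLp (pd i f) 2) (h2 : ∀ i, MemLp (pd i (pd i f)) 2)
    (hn : ∫ x, ‖f x‖ ^ 2 = 1) :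
    Integrable (fun x => Vpot p u x * ‖f x‖ ^ 2) ∧
    (∑ i, ∫ x, ‖pd i f x‖ ^ 2) + (ω - lam) / 2 ≤ (∫ x, Vpot p u x * ‖f x‖ ^ 2) +
      (1 / (2 * (ω - lam))) * ∫ x, ‖LplusC ω p u f x - (lam : ℂ) * f x‖ ^ 2 := by
  have hκ : 0 < ω - lam := by linarith
  set ψ : EuclideanSpace ℝ (Fin N) → ℂ := fun y => (u y : ℂ) * f y with hψ
  have hψs : ContDiff ℝ (⊤ : ℕ∞) ψ := (ofReal_contDiff hu).mul hf
  have hui := fun i => pd_contDiff hu i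
  have huii := fun i => pd_contDiff (hui i) i
  have m0 : MemLp ψ 2 := bmul hu.continuous hb0 h0
  have m1 : ∀ i, MemLp (pd i ψ) 2 := by
    intro i
    rw [hψ, pd_mul hu hf]
    exact (bmul (hui i).continuous (hb1 i) h0).add (bmul hu.continuous hb0 (h1 i))
  have m2 : ∀ i, MemLp (pd i (pd i ψ)) 2 := by
    intro i
    rw [hψ, pd_pd_mul hu hf]
    exact ((bmul (huii i).continuous (hb2 i) h0).add (bmul (hui i).continuous (hb1 i) (h1 i))).add
      ((bmul (hui i).continuous (hb1 i) (h1 i)).add (bmul hu.continuous hb0 (h2 i)))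
  obtain ⟨gi, ge⟩ := green hf h0 h1 h2
  obtain ⟨ki, ke⟩ := green hψs m0 m1 m2
  have lf : MemLp (lap f) 2 := memLp_finsetSum _ fun i _ => h2 i
  have lψ : MemLp (lap ψ) 2 := memLp_finsetSum _ fun i _ => m2 i
  set L : EuclideanSpace ℝ (Fin N) → ℂ := fun x => LplusC ω p u f x - (lam : ℂ) * f x with hL
  have hLe : ∀ x, L x = -lap f x - 2 * ((u x : ℂ) * lap ψ x) + (ω : ℂ) * f x
      - (Vpot p u x : ℂ) * f x - (lam : ℂ) * f x := by
    intro x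
    simp only [hL, LplusC, Vpot]
    ring
  have mL : MemLp L 2 := by
    have : MemLp (fun x => -lap f x - 2 * ((u x : ℂ) * lap ψ x) + (ω : ℂ) * f x
      - (Vpot p u x : ℂ) * f x - (lam : ℂ) * f x) 2 :=
      (((lf.neg.sub ((bmul hu.continuous hb0 lψ).const_mul 2)).add (h0.const_mul _)).sub
        (bmul hV hM h0)).sub (h0.const_mul _)
    rwa [← funext hLe] at this
  have if2 : Integrable (fun x => ‖f x‖ ^ 2) := (memLp_two_iff_integrable_sq_norm h0.1).1 h0
  have iL2 : Integrable (fun x => ‖L x‖ ^ 2) := (memLp_two_iff_integrable_sq_norm mL.1).1 mL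
  have iV : Integrable (fun x => Vpot p u x * ‖f x‖ ^ 2) := by
    refine (if2.const_mul M).mono' (hV.aestronglyMeasurable.mul if2.1) (ae_of_all _ fun x => ?_)
    rw [norm_mul, Real.norm_eq_abs, Real.norm_eq_abs, abs_of_nonneg (sq_nonneg ‖f x‖)]
    gcongr
    exact hM x
  refine ⟨iV, ?_⟩
  have pt : ∀ x, (ω - lam) / 2 * ‖f x‖ ^ 2 ≤
      (Vpot p u x * ‖f x‖ ^ 2 + 1 / (2 * (ω - lam)) * ‖L x‖ ^ 2) +
      (((starRingEnd ℂ) (f x) * lap f x).re + 2 * ((starRingEnd ℂ) (ψ x) * lap ψ x).re) := by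
    intro x
    have e1 : ((starRingEnd ℂ) (f x) * L x).re = (ω - lam) * ‖f x‖ ^ 2 - Vpot p u x * ‖f x‖ ^ 2
        - ((starRingEnd ℂ) (f x) * lap f x).re - 2 * ((starRingEnd ℂ) (ψ x) * lap ψ x).re := by
      rw [hLe, ← Complex.normSq_eq_norm_sq, Complex.normSq_apply]
      simp only [hψ, Complex.mul_re, Complex.mul_im, Complex.sub_re, Complex.sub_im, Complex.add_re,
        Complex.add_im, Complex.neg_re, Complex.neg_im, Complex.ofReal_re, Complex.ofReal_im,
        Complex.conj_re, Complex.conj_im, map_mul, Complex.conj_ofReal, Complex.re_ofNat,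
        Complex.im_ofNat]
      ring
    have e2 : ((starRingEnd ℂ) (f x) * L x).re ≤ ‖f x‖ * ‖L x‖ := by
      refine (Complex.re_le_norm _).trans (le_of_eq ?_)
      simp
    have e3 : ‖f x‖ * ‖L x‖ ≤ (ω - lam) / 2 * ‖f x‖ ^ 2 + 1 / (2 * (ω - lam)) * ‖L x‖ ^ 2 := by
      have : (ω - lam) / 2 * ‖f x‖ ^ 2 + 1 / (2 * (ω - lam)) * ‖L x‖ ^ 2 - ‖f x‖ * ‖L x‖
          = 1 / (2 * (ω - lam)) * ((ω - lam) * ‖f x‖ - ‖L x‖) ^ 2 := by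
        field_simp; ring
      have h : 0 ≤ 1 / (2 * (ω - lam)) * ((ω - lam) * ‖f x‖ - ‖L x‖) ^ 2 := by positivity
      linarith
    linarith
  have I := integral_mono (if2.const_mul ((ω - lam) / 2))
    ((iV.add (iL2.const_mul (1 / (2 * (ω - lam))))).add (gi.add (ki.const_mul 2))) pt
  have E : ∫ x, ((Vpot p u x * ‖f x‖ ^ 2 + 1 / (2 * (ω - lam)) * ‖L x‖ ^ 2) +
      (((starRingEnd ℂ) (f x) * lap f x).re + 2 * ((starRingEnd ℂ) (ψ x) * lap ψ x).re))
      = ((∫ x, Vpot p u x * ‖f x‖ ^ 2) + 1 / (2 * (ω - lam)) * ∫ x, ‖L x‖ ^ 2) +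
        (-(∑ i, ∫ x, ‖pd i f x‖ ^ 2) + 2 * -(∑ i, ∫ x, ‖pd i ψ x‖ ^ 2)) := by
    have a1 : Integrable (fun x => Vpot p u x * ‖f x‖ ^ 2 + 1 / (2 * (ω - lam)) * ‖L x‖ ^ 2) :=
      iV.add (iL2.const_mul (1 / (2 * (ω - lam))))
    have a2 : Integrable (fun x => ((starRingEnd ℂ) (f x) * lap f x).re +
        2 * ((starRingEnd ℂ) (ψ x) * lap ψ x).re) := gi.add (ki.const_mul 2)
    rw [integral_add a1 a2,
      integral_add iV (iL2.const_mul (1 / (2 * (ω - lam)))), integral_add gi (ki.const_mul 2),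
      integral_const_mul, integral_const_mul, ge, ke]
  have I' := I.trans_eq E
  rw [integral_const_mul, hn] at I'
  have hpos : 0 ≤ ∑ i, ∫ x, ‖pd i ψ x‖ ^ 2 :=
    Finset.sum_nonneg fun i _ => integral_nonneg fun x => by positivity
  linarith

/-- There is no Weyl sequence for `L₊` at any `λ < ω`; in particular the continuous
spectrum of `L₊` is contained in `[ω, ∞)`. -/
theorem stmt4 (N : ℕ) (hN : 2 ≤ N) (ω p : ℝ) (hω : 0 < ω) (hp : 1 < p)
    (hpmax : 3 ≤ N → p < (3 * (N : ℝ) + 2) / ((N : ℝ) - 2))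
    (u : EuclideanSpace ℝ (Fin N) → ℝ) (hu : IsGroundState N ω p u)
    (lam : ℝ) (hlam : lam < ω) :
    ¬ ∃ φ : ℕ → EuclideanSpace ℝ (Fin N) → ℂ,
      (∀ n, ContDiff ℝ (⊤ : ℕ∞) (φ n)) ∧
      (∀ n, ∀ k : ℕ, k ≤ 2 → Integrable (fun x => ‖iteratedFDeriv ℝ k (φ n) x‖ ^ 2)) ∧
      (∀ n, ∫ x, ‖φ n x‖ ^ 2 = 1) ∧
      (∀ g : EuclideanSpace ℝ (Fin N) → ℂ, Integrable (fun x => ‖g x‖ ^ 2) →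
        Tendsto (fun n => ∫ x, φ n x * (starRingEnd ℂ) (g x)) atTop (𝓝 0)) ∧
      Tendsto (fun n => ∫ x, ‖LplusC ω p u (φ n) x - (lam : ℂ) * φ n x‖ ^ 2) atTop (𝓝 0) := by
  rintro ⟨φ, hs, hint, hnorm, hweak, hL⟩
  obtain ⟨B, hB, δ, hδ, hb⟩ := u_bounds hu
  obtain ⟨M, hVc, hVi, hVM⟩ := V_facts hN hp hu
  have hκ : 0 < ω - lam := by linarith
  have hB' : ∀ x : EuclideanSpace ℝ (Fin N), B * Real.exp (-δ * ‖x‖) ≤ B := by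
    intro x
    have : Real.exp (-δ * ‖x‖) ≤ 1 := by
      apply Real.exp_le_one_iff.2
      nlinarith [norm_nonneg x]
    nlinarith
  have m0 : ∀ n, MemLp (φ n) 2 := by
    intro n
    rw [memLp_two_iff_integrable_sq_norm (hs n).continuous.aestronglyMeasurable]
    simpa using hint n 0 (by norm_num)
  have m1 : ∀ n i, MemLp (pd i (φ n)) 2 := by
    intro n i
    have hc := (pd_contDiff (hs n) i).continuous
    rw [memLp_two_iff_integrable_sq_norm hc.aestronglyMeasurable]
    refine (hint n 1 (by norm_num)).mono' (by fun_prop) (ae_of_all _ fun x => ?_)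
    rw [Real.norm_of_nonneg (by positivity)]
    gcongr
    exact norm_pd_le _ _ _
  have m2 : ∀ n i, MemLp (pd i (pd i (φ n))) 2 := by
    intro n i
    have hc := (pd_contDiff (pd_contDiff (hs n) i) i).continuous
    rw [memLp_two_iff_integrable_sq_norm hc.aestronglyMeasurable]
    refine (hint n 2 (by norm_num)).mono' (by fun_prop) (ae_of_all _ fun x => ?_)
    rw [Real.norm_of_nonneg (by positivity)]
    gcongr
    exact norm_pd_pd_le (hs n) _ _ _
  have hE := fun n => energy (ω := ω) (p := p) hlam hu.smooth
    (fun x => (hb x).1.trans (hB' x)) (fun i x => ((hb x).2.1 i).trans (hB' x))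
    (fun i x => ((hb x).2.2 i).trans (hB' x)) hVc hVM (hs n) (m0 n) (m1 n) (m2 n) (hnorm n)
  have i0 : ∀ n, Integrable (fun x => ‖φ n x‖ ^ 2) := fun n =>
    (memLp_two_iff_integrable_sq_norm (m0 n).1).1 (m0 n)
  have i1 : ∀ n i, Integrable (fun x => ‖pd i (φ n) x‖ ^ 2) := fun n i =>
    (memLp_two_iff_integrable_sq_norm (m1 n i).1).1 (m1 n i)
  have h1 : ∀ n, ∫⁻ x, ‖φ n x‖ₑ ^ 2 ≤ 1 := by
    intro n
    have := ofReal_integral_eq_lintegral_ofReal (i0 n) (ae_of_all _ fun x => by positivity)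
    rw [hnorm n] at this
    simp only [ENNReal.ofReal_pow (norm_nonneg _), ofReal_norm] at this
    rw [← this]; simp
  have hVle : ∀ n, ∫ x, Vpot p u x * ‖φ n x‖ ^ 2 ≤ M := by
    intro n
    calc ∫ x, Vpot p u x * ‖φ n x‖ ^ 2 ≤ ∫ x, M * ‖φ n x‖ ^ 2 := by
          refine integral_mono (hE n).1 ((i0 n).const_mul M) fun x => ?_
          exact mul_le_mul_of_nonneg_right ((le_abs_self _).trans (hVM x)) (by positivity)
      _ = M := by rw [integral_const_mul, hnorm n, mul_one]
  have hR := hL.const_mul (1 / (2 * (ω - lam)))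
  rw [mul_zero] at hR
  have hG : ∀ᶠ n in atTop, ∫⁻ x, ‖fderiv ℝ (φ n) x‖ₑ ^ 2 ≤ ENNReal.ofReal (M + 1) := by
    filter_upwards [hR.eventually (ge_mem_nhds (show (0:ℝ) < 1 by norm_num))] with n hn
    have hsum : ∫ x, ∑ i, ‖pd i (φ n) x‖ ^ 2 ≤ M + 1 := by
      rw [integral_finsetSum _ fun i _ => i1 n i]
      have := (hE n).2
      have := hVle n
      linarith
    refine le_trans ?_ (ENNReal.ofReal_le_ofReal hsum)
    rw [ofReal_integral_eq_lintegral_ofReal (integrable_finsetSum _ fun i _ => i1 n i)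
      (ae_of_all _ fun x => by positivity)]
    refine lintegral_mono fun x => ?_
    rw [← ofReal_norm, ← ENNReal.ofReal_pow (norm_nonneg _)]
    exact ENNReal.ofReal_le_ofReal (fderiv_sq_le _ _)
  have hη : 0 < (ω - lam) / 8 := by linarith
  have hrel := rellich hVi hVc.measurable hVM hs h1 hG hweak hη
  obtain ⟨n, hn1, hn2⟩ := (hrel.and (hR.eventually (ge_mem_nhds hη))).exists
  have hVn : ∫ x, Vpot p u x * ‖φ n x‖ ^ 2 ≤ (ω - lam) / 8 := by
    refine (le_abs_self _).trans ?_
    rw [← Real.norm_eq_abs, ← ENNReal.ofReal_le_ofReal_iff hη.le, ofReal_norm]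
    refine (enorm_integral_le_lintegral_enorm _).trans (le_trans (le_of_eq ?_) hn1)
    congr 1; ext x
    rw [enorm_mul, enorm_pow, enorm_norm]
  have hfin := (hE n).2
  have hpos : 0 ≤ ∑ i, ∫ x, ‖pd i (φ n) x‖ ^ 2 :=
    Finset.sum_nonneg fun i _ => integral_nonneg fun x => by positivity
  linarith

end
end
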